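/- ∫₀¹ (x/π)·log(sin(πx)/π)·Cl₂(2πx) dx = ζ(3)·log(2π)/(2π²) + π²/720, where Cl₂ is the Clausen function. -/

import Mathlib

open Real

/-- The Clausen function `Cl₂(θ) = ∑_{k=1}^∞ sin(kθ)/k²`. -/
noncomputable def Cl2 (θ : ℝ) : ℝ := ∑' k : ℕ, Real.sin ((k + 1) * θ) / ((k : ℝ) + 1) ^ 2

open Filter Topology MeasureTheory Set

/-- The summable bound dominating the series of the Clausen function. -/
theorem summable_one_div_add_one_sq : Summable fun k : ℕ => 1 / ((k : ℝ) + 1) ^ 2 := by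
  have h := (summable_nat_add_iff 1).2 (Real.summable_one_div_nat_pow.2 one_lt_two)
  simpa using h

theorem norm_sin_div_le (k : ℕ) (θ : ℝ) :
    ‖Real.sin ((k + 1) * θ) / ((k : ℝ) + 1) ^ 2‖ ≤ 1 / ((k : ℝ) + 1) ^ 2 := by
  rw [norm_div, Real.norm_of_nonneg (by positivity : (0 : ℝ) ≤ ((k : ℝ) + 1) ^ 2)]
  gcongr
  exact Real.abs_sin_le_one _

theorem continuous_Cl2 : Continuous Cl2 :=
  continuous_tsum (fun k => by fun_prop) summable_one_div_add_one_sq norm_sin_div_le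

theorem sin_int_mul_two_pi (n : ℤ) : Real.sin (n * (2 * π)) = 0 := by
  simpa using Real.sin_add_int_mul_two_pi 0 n

theorem sin_nat_mul_two_pi (n : ℕ) : Real.sin (n * (2 * π)) = 0 :=
  sin_int_mul_two_pi n

theorem Cl2_two_pi : Cl2 (2 * π) = 0 := by
  have h (k : ℕ) : Real.sin ((k + 1) * (2 * π)) = 0 := by
    exact_mod_cast sin_nat_mul_two_pi (k + 1)
  simp [Cl2, h]

/-- Real part of the Taylor series of `-log (1 - z)` at `z = r * exp (I * θ)`. -/
theorem hasSum_pow_mul_cos_div {r : ℝ} (hr0 : 0 ≤ r) (hr1 : r < 1) (θ : ℝ) :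
    HasSum (fun k : ℕ => r ^ (k + 1) * Real.cos ((k + 1) * θ) / ((k : ℝ) + 1))
      (-Real.log ‖Complex.exp (Complex.I * θ) * r - 1‖) := by
  have hz : ‖Complex.exp (Complex.I * θ) * r‖ < 1 := by
    rw [mul_comm Complex.I, norm_mul, Complex.norm_exp_ofReal_mul_I]
    simpa [abs_of_nonneg hr0] using hr1
  have h := Complex.hasSum_re ((hasSum_nat_add_iff' 1).2 (Complex.hasSum_taylorSeries_neg_log hz))
  convert h using 1
  · ext k
    have e : (Complex.exp (Complex.I * θ) * r) ^ (k + 1) / ((k + 1 : ℕ) : ℂ) =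
        ((r ^ (k + 1) / ((k : ℝ) + 1) : ℝ) : ℂ) *
          Complex.exp (((((k : ℝ) + 1) * θ : ℝ) : ℂ) * Complex.I) := by
      rw [mul_pow, ← Complex.exp_nat_mul]
      push_cast
      ring_nf
    rw [e, Complex.re_ofReal_mul, Complex.exp_ofReal_mul_I_re]
    ring
  · simp [Complex.log_re, norm_sub_rev]

theorem hasDerivAt_tsum_pow_mul_sin_div {r : ℝ} (hr0 : 0 ≤ r) (hr1 : r < 1) (θ : ℝ) :
    HasDerivAt (fun θ => ∑' k : ℕ, r ^ (k + 1) * (Real.sin ((k + 1) * θ) / ((k : ℝ) + 1) ^ 2))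
      (-Real.log ‖Complex.exp (Complex.I * θ) * r - 1‖) θ := by
  rw [← (hasSum_pow_mul_cos_div hr0 hr1 θ).tsum_eq]
  have hu : Summable fun k : ℕ => r ^ (k + 1) :=
    (summable_nat_add_iff 1).2 (summable_geometric_of_lt_one hr0 hr1)
  refine hasDerivAt_tsum
    (g := fun (k : ℕ) θ => r ^ (k + 1) * (Real.sin ((k + 1) * θ) / ((k : ℝ) + 1) ^ 2)) (u := fun k : ℕ => r ^ (k + 1))
    (g' := fun (k : ℕ) θ => r ^ (k + 1) * Real.cos ((k + 1) * θ) / ((k : ℝ) + 1))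
    hu (fun k y => ?_) (fun k y => ?_) (y₀ := 0) (by simp) θ
  · have h := ((((hasDerivAt_id y).const_mul ((k : ℝ) + 1)).sin).div_const
      (((k : ℝ) + 1) ^ 2)).const_mul (r ^ (k + 1))
    convert! h using 1
    simp only [id]
    field_simp
  · have hk : (1 : ℝ) ≤ (k : ℝ) + 1 := by simp
    rw [norm_div, norm_mul, Real.norm_of_nonneg (by positivity : (0 : ℝ) ≤ (k : ℝ) + 1),
      Real.norm_of_nonneg (by positivity : (0 : ℝ) ≤ r ^ (k + 1))]
    have hc : ‖Real.cos ((k + 1) * y)‖ ≤ 1 := Real.abs_cos_le_one _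
    calc _ ≤ r ^ (k + 1) * 1 / 1 := by gcongr
      _ = _ := by ring

theorem tendsto_tsum_pow_mul_sin_div (θ : ℝ) :
    Tendsto (fun r : ℝ => ∑' k : ℕ, r ^ (k + 1) * (Real.sin ((k + 1) * θ) / ((k : ℝ) + 1) ^ 2))
      (𝓝[<] 1) (𝓝 (Cl2 θ)) := by
  rw [Cl2]
  refine tendsto_tsum_of_dominated_convergence summable_one_div_add_one_sq (fun k => ?_) ?_
  · have h : Continuous fun r : ℝ =>
        r ^ (k + 1) * (Real.sin ((k + 1) * θ) / ((k : ℝ) + 1) ^ 2) := by fun_prop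
    have h' := (h.tendsto 1).mono_left (nhdsWithin_le_nhds (s := Iio 1))
    rwa [one_pow, one_mul] at h'
  · filter_upwards [Ioo_mem_nhdsLT (zero_lt_one' ℝ)] with r hr k
    rw [norm_mul, Real.norm_of_nonneg (pow_nonneg hr.1.le _), ← one_mul (1 / ((k : ℝ) + 1) ^ 2)]
    exact mul_le_mul (pow_le_one₀ hr.1.le hr.2.le) (norm_sin_div_le k θ) (norm_nonneg _)
      zero_le_one

theorem log_norm_exp_sub_one (θ : ℝ) :
    Real.log ‖Complex.exp (Complex.I * θ) * (1 : ℝ) - 1‖ = Real.log (2 * Real.sin (θ / 2)) := by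
  rw [Complex.ofReal_one, mul_one, Complex.norm_exp_I_mul_ofReal_sub_one, Real.norm_eq_abs,
    Real.log_abs]

theorem continuousAt_log_norm_exp_mul_sub_one {θ : ℝ} (hθ : Real.sin (θ / 2) ≠ 0) :
    ContinuousAt (fun p : ℝ × ℝ => -Real.log ‖Complex.exp (Complex.I * p.2) * p.1 - 1‖)
      (1, θ) := by
  have hne : ‖Complex.exp (Complex.I * θ) * (1 : ℝ) - 1‖ ≠ 0 := by
    rw [Complex.ofReal_one, mul_one, Complex.norm_exp_I_mul_ofReal_sub_one]
    simpa using hθ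
  have hc : Continuous fun p : ℝ × ℝ => ‖Complex.exp (Complex.I * p.2) * p.1 - 1‖ := by fun_prop
  exact ((hc.tendsto (1, θ)).log hne).neg

/-- If the derivatives `F (r, ·)` of `f r` are jointly continuous at `(a, x)`, then the pointwise
limit of `f r` as `r` tends to `a` from the left has derivative `F (a, x)` at `x`. -/
theorem hasDerivAt_of_continuousAt_uncurry {f : ℝ → ℝ → ℝ} {g : ℝ → ℝ} {F : ℝ × ℝ → ℝ} {a x : ℝ}
    (hF : ContinuousAt F (a, x))
    (hf : ∀ᶠ r in 𝓝[<] a, ∀ y, HasDerivAt (f r) (F (r, y)) y)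
    (hg : ∀ y, Tendsto (fun r => f r y) (𝓝[<] a) (𝓝 (g y))) :
    HasDerivAt g (F (a, x)) x := by
  have hF1 : Tendsto F (𝓝[<] a ×ˢ 𝓝 x) (𝓝 (F (a, x))) := by
    refine hF.tendsto.mono_left ?_
    rw [nhds_prod_eq]
    exact Filter.prod_mono_left _ nhdsWithin_le_nhds
  have hF2 : Tendsto (fun p : ℝ × ℝ => F (a, p.2)) (𝓝[<] a ×ˢ 𝓝 x) (𝓝 (F (a, x))) := by
    have h1 : Tendsto (fun y : ℝ => F (a, y)) (𝓝 x) (𝓝 (F (a, x))) :=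
      hF.tendsto.comp (by fun_prop : ContinuousAt (fun y : ℝ => (a, y)) x)
    exact h1.comp tendsto_snd
  refine hasDerivAt_of_tendstoUniformlyOnFilter (l := 𝓝[<] a) (f := f)
    (f' := fun r y => F (r, y)) (g' := fun y => F (a, y)) ?_ ?_ (Eventually.of_forall hg)
  · rw [Metric.tendstoUniformlyOnFilter_iff]
    intro ε hε
    have h := hF2.dist hF1
    rw [dist_self] at h
    exact h.eventually_lt_const hε
  · filter_upwards [hf.prod_inl (𝓝 x)] with p hp using hp p.2

theorem hasDerivAt_Cl2 {θ : ℝ} (hθ : Real.sin (θ / 2) ≠ 0) :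
    HasDerivAt Cl2 (-Real.log (2 * Real.sin (θ / 2))) θ := by
  rw [← log_norm_exp_sub_one]
  refine hasDerivAt_of_continuousAt_uncurry (continuousAt_log_norm_exp_mul_sub_one hθ) ?_
    tendsto_tsum_pow_mul_sin_div
  filter_upwards [Ioo_mem_nhdsLT (zero_lt_one' ℝ)] with r hr y
  exact hasDerivAt_tsum_pow_mul_sin_div hr.1.le hr.2 y

/-- Termwise integration of a continuous function against the Clausen function. -/
theorem hasSum_integral_mul_Cl2 {h : ℝ → ℝ} (hh : Continuous h) :
    HasSum (fun k : ℕ => (∫ x in (0 : ℝ)..1, h x * Real.sin ((k + 1) * (2 * π * x))) /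
      ((k : ℝ) + 1) ^ 2) (∫ x in (0 : ℝ)..1, h x * Cl2 (2 * π * x)) := by
  simp_rw [← intervalIntegral.integral_div]
  refine intervalIntegral.hasSum_integral_of_dominated_convergence
    (fun k x => |h x| * (1 / ((k : ℝ) + 1) ^ 2)) (fun k => ?_) (fun k => ?_) ?_ ?_ ?_
  · exact Continuous.aestronglyMeasurable (by fun_prop)
  · refine Eventually.of_forall fun x _ => ?_
    rw [mul_div_assoc, norm_mul]
    exact mul_le_mul_of_nonneg_left (norm_sin_div_le k _) (norm_nonneg _)
  · exact Eventually.of_forall fun x _ => summable_one_div_add_one_sq.mul_left _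
  · simp_rw [tsum_mul_left]
    exact Continuous.intervalIntegrable (by fun_prop) _ _
  · refine Eventually.of_forall fun x _ => ?_
    simp_rw [mul_div_assoc]
    exact (Summable.of_norm_bounded summable_one_div_add_one_sq
      (fun k => norm_sin_div_le k _)).hasSum.mul_left _

theorem integral_mul_sin_two_pi_mul (k : ℕ) :
    ∫ x in (0 : ℝ)..1, x * Real.sin ((k + 1) * (2 * π * x)) = -1 / (2 * π * ((k : ℝ) + 1)) := by
  have hc : 2 * π * ((k : ℝ) + 1) ≠ 0 := by positivity
  set c := 2 * π * ((k : ℝ) + 1) with hcdef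
  have hcos : Real.cos c = 1 := by
    have := Real.cos_nat_mul_two_pi (k + 1)
    rw [hcdef, mul_comm]
    exact_mod_cast this
  have hsin : Real.sin c = 0 := by
    have := sin_nat_mul_two_pi (k + 1)
    rw [hcdef, mul_comm]
    exact_mod_cast this
  have hd (x : ℝ) : HasDerivAt (fun x => -x * Real.cos (c * x) / c + Real.sin (c * x) / c ^ 2)
      (x * Real.sin ((k + 1) * (2 * π * x))) x := by
    have hx : HasDerivAt (fun x => c * x) c x := by simpa using (hasDerivAt_id x).const_mul c
    have h := (((hasDerivAt_id x).neg.mul hx.cos).div_const c).add (hx.sin.div_const (c ^ 2))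
    convert! h using 1
    rw [show ((k : ℝ) + 1) * (2 * π * x) = c * x by rw [hcdef]; ring]
    simp only [Pi.neg_apply, id]
    field_simp
    ring
  rw [intervalIntegral.integral_eq_sub_of_hasDerivAt (fun x _ => hd x)
    (Continuous.intervalIntegrable (by fun_prop) _ _)]
  simp [hcos, hsin]

theorem integral_cos_int_mul_two_pi {n : ℤ} (hn : n ≠ 0) :
    ∫ x in (0 : ℝ)..1, Real.cos (n * (2 * π) * x) = 0 := by
  have hc : (n : ℝ) * (2 * π) ≠ 0 := by positivity
  rw [intervalIntegral.integral_comp_mul_left (fun x => Real.cos x) hc, integral_cos]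
  simp [sin_int_mul_two_pi]

theorem integral_sin_mul_sin (j k : ℕ) :
    ∫ x in (0 : ℝ)..1, Real.sin ((j + 1) * (2 * π * x)) * Real.sin ((k + 1) * (2 * π * x)) =
      if k = j then 1 / 2 else 0 := by
  have e (x : ℝ) : Real.sin ((j + 1) * (2 * π * x)) * Real.sin ((k + 1) * (2 * π * x)) =
      (Real.cos (((j - k : ℤ) : ℝ) * (2 * π) * x) -
        Real.cos (((j + k + 2 : ℤ) : ℝ) * (2 * π) * x)) / 2 := by
    rw [show (((j - k : ℤ) : ℝ) * (2 * π) * x) =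
        (j + 1) * (2 * π * x) - (k + 1) * (2 * π * x) by push_cast; ring,
      show (((j + k + 2 : ℤ) : ℝ) * (2 * π) * x) =
        (j + 1) * (2 * π * x) + (k + 1) * (2 * π * x) by push_cast; ring,
      Real.cos_sub, Real.cos_add]
    ring
  simp_rw [e]
  rw [intervalIntegral.integral_div, intervalIntegral.integral_sub
    (Continuous.intervalIntegrable (by fun_prop) _ _)
    (Continuous.intervalIntegrable (by fun_prop) _ _),
    integral_cos_int_mul_two_pi (n := j + k + 2) (by lia)]
  split_ifs with h
  · simp [h]
  · rw [integral_cos_int_mul_two_pi (by lia)]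
    simp

theorem integral_mul_Cl2 :
    ∫ x in (0 : ℝ)..1, x * Cl2 (2 * π * x) = -(riemannZeta 3).re / (2 * π) := by
  have h := (hasSum_integral_mul_Cl2 continuous_id).tsum_eq
  simp only [id, integral_mul_sin_two_pi_mul] at h
  have hz : riemannZeta 3 = ((∑' k : ℕ, 1 / ((k : ℝ) + 1) ^ 3 : ℝ) : ℂ) := by
    have := zeta_eq_tsum_one_div_nat_add_one_cpow (s := 3) (by simp)
    rw [this]
    push_cast
    congr with k
    exact_mod_cast rfl
  rw [← h, hz, Complex.ofReal_re, neg_div, ← tsum_div_const, ← tsum_neg]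
  congr with k
  field_simp

theorem integral_Cl2_mul_Cl2 :
    ∫ x in (0 : ℝ)..1, Cl2 (2 * π * x) * Cl2 (2 * π * x) = π ^ 4 / 180 := by
  have hc : Continuous fun x : ℝ => Cl2 (2 * π * x) := continuous_Cl2.comp (by fun_prop)
  have hcoef (k : ℕ) : ∫ x in (0 : ℝ)..1, Cl2 (2 * π * x) * Real.sin ((k + 1) * (2 * π * x)) =
      1 / 2 / ((k : ℝ) + 1) ^ 2 := by
    have h := hasSum_integral_mul_Cl2 (h := fun x => Real.sin ((k + 1) * (2 * π * x)))
      (by fun_prop)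
    simp_rw [integral_sin_mul_sin] at h
    simp_rw [mul_comm (Cl2 _)]
    refine h.unique ?_
    convert hasSum_ite_eq k (1 / 2 / ((k : ℝ) + 1) ^ 2) using 2 with j
    split_ifs with hj <;> simp [hj]
  have h := hasSum_integral_mul_Cl2 hc
  simp_rw [hcoef] at h
  refine h.unique ?_
  have h4 := ((hasSum_nat_add_iff' 1).2 hasSum_zeta_four).div_const 2
  convert! h4 using 1
  · ext k
    push_cast
    field_simp
  · simp
    ring

theorem intervalIntegrable_log_sin_pi_mul :
    IntervalIntegrable (fun x : ℝ => Real.log (Real.sin (π * x))) volume 0 1 := by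
  have h := (intervalIntegrable_log_sin (a := 0) (b := π)).comp_mul_left (c := π)
  simpa [Function.comp_def, Real.pi_ne_zero] using h

/-- `∫₀¹ (x/π)·log(sin(πx)/π)·Cl₂(2πx) dx = ζ(3)·log(2π)/(2π²) + π²/720`. -/
theorem integral_x_div_pi_log_sin_div_pi_mul_Cl2 :
    ∫ x in (0:ℝ)..1, (x / π) * Real.log (Real.sin (π * x) / π) * Cl2 (2 * π * x) =
      (riemannZeta 3).re * Real.log (2 * π) / (2 * π ^ 2) + π ^ 2 / 720 := by
  have hπ := Real.pi_pos
  have hS : Continuous fun x : ℝ => Cl2 (2 * π * x) := continuous_Cl2.comp (by fun_prop)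
  have hsin {x : ℝ} (hx : x ∈ Ioo (0 : ℝ) 1) : 0 < Real.sin (π * x) :=
    Real.sin_pos_of_pos_of_lt_pi (mul_pos hπ hx.1) (by nlinarith [hx.2])
  let G : ℝ → ℝ := fun x => Cl2 (2 * π * x) * Cl2 (2 * π * x) -
    4 * π * (x * Cl2 (2 * π * x) * (Real.log 2 + Real.log (Real.sin (π * x))))
  have hGint : IntervalIntegrable G volume 0 1 := by
    refine (Continuous.intervalIntegrable (by fun_prop) _ _).sub (IntervalIntegrable.const_mul ?_ _)
    exact (intervalIntegrable_const.add intervalIntegrable_log_sin_pi_mul).continuousOn_mul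
      (Continuous.continuousOn (by fun_prop))
  have hG : ∫ x in (0 : ℝ)..1, G x = 0 := by
    rw [intervalIntegral.integral_eq_sub_of_hasDerivAt_of_le zero_le_one
      (f := fun x => x * (Cl2 (2 * π * x) * Cl2 (2 * π * x)))
      (Continuous.continuousOn (by fun_prop)) (fun x hx => ?_) hGint]
    · simp [Cl2_two_pi]
    · have hθ : 2 * π * x / 2 = π * x := by ring
      have hx0 := hsin hx
      have h1 : HasDerivAt Cl2 (-Real.log (2 * Real.sin (2 * π * x / 2))) (2 * π * x) :=
        hasDerivAt_Cl2 (by rw [hθ]; exact hx0.ne')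
      have h2 : HasDerivAt (fun x : ℝ => 2 * π * x) (2 * π) x := by
        simpa using (hasDerivAt_id x).const_mul (2 * π)
      have h3 : HasDerivAt (fun x : ℝ => Cl2 (2 * π * x)) _ x := h1.comp x h2
      convert! (hasDerivAt_id x).mul (h3.mul h3) using 1
      simp only [G, id, Pi.mul_apply]
      rw [hθ, Real.log_mul two_ne_zero hx0.ne']
      ring
  have hcongr : ∫ x in (0:ℝ)..1, (x / π) * Real.log (Real.sin (π * x) / π) * Cl2 (2 * π * x) =
      ∫ x in (0:ℝ)..1, (1 / (4 * π ^ 2) * (Cl2 (2 * π * x) * Cl2 (2 * π * x)) -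
        Real.log (2 * π) / π * (x * Cl2 (2 * π * x))) - 1 / (4 * π ^ 2) * G x := by
    refine intervalIntegral.integral_congr_Ioo_of_le zero_le_one fun x hx => ?_
    simp only [G]
    rw [Real.log_div (hsin hx).ne' hπ.ne', Real.log_mul two_ne_zero hπ.ne']
    field_simp
    ring
  rw [hcongr, intervalIntegral.integral_sub (Continuous.intervalIntegrable (by fun_prop) _ _)
      (hGint.const_mul _), intervalIntegral.integral_sub
      (Continuous.intervalIntegrable (by fun_prop) _ _)
      (Continuous.intervalIntegrable (by fun_prop) _ _),
    intervalIntegral.integral_const_mul, intervalIntegral.integral_const_mul,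
    intervalIntegral.integral_const_mul, hG, integral_mul_Cl2, integral_Cl2_mul_Cl2]
  field_simp
  ring
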